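/- For every τ > 0 there exists ρ₀ > 0 such that for every ρ ∈ (0, ρ₀) and every ε ∈ (0, 1] there exists a smooth compactly supported function u₀ : ℝ^N → ℝ with support contained in Ω satisfying u₀ ≥ 0, ∫_{ℝ^N} u₀² dx = ρ, ∫_{ℝ^N} |∇u₀|² dx < τ², and J_ε(u₀) < 0. -/

import Mathlib

/-!
Test the energy on `t • φ`, where `φ` is a bump function supported in `Ω` and `t → 0⁺`. The
Dirichlet term is of order `t ^ 2`, while the singular term is at least `t ^ (1 - r)` times a
positive constant, uniformly in `ε ≥ 0`. As `1 - r < 2`, the singular term wins, and the third term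
of the energy only helps. The squared `L²` norm `t ^ 2 * ∫ φ ^ 2` takes every value `ρ > 0`, and `t`
is small when `ρ` is.
-/

open MeasureTheory Set

open Filter
open scoped Topology

section SmallParameters

theorem eventually_const_mul_rpow_lt_const_mul_rpow {q s a b : ℝ} (hqs : q < s) (hb : 0 < b) :
    ∀ᶠ t in 𝓝[>] (0 : ℝ), a * t ^ s < b * t ^ q := by
  have hlim : Tendsto (fun t : ℝ ↦ a * t ^ (s - q)) (𝓝[>] 0) (𝓝 0) := by
    have hcont : ContinuousAt (fun t : ℝ ↦ a * t ^ (s - q)) 0 :=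
      (Real.continuousAt_rpow_const 0 (s - q) (.inr (sub_pos.2 hqs).le)).const_mul a
    simpa [Real.zero_rpow (sub_pos.2 hqs).ne'] using hcont.tendsto.mono_left nhdsWithin_le_nhds
  filter_upwards [hlim.eventually_lt_const hb, self_mem_nhdsWithin] with t ht ht0
  calc a * t ^ s = a * t ^ (s - q) * t ^ q := by
        rw [mul_assoc, ← Real.rpow_add ht0, sub_add_cancel]
    _ < b * t ^ q := mul_lt_mul_of_pos_right ht (Real.rpow_pos_of_pos ht0 q)

theorem eventually_exists_sq_mul_eq {a : ℝ} (ha : 0 < a) {P : ℝ → Prop}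
    (hP : ∀ᶠ t in 𝓝[>] (0 : ℝ), P t) :
    ∀ᶠ ρ in 𝓝[>] (0 : ℝ), ∃ t > 0, t ^ 2 * a = ρ ∧ P t := by
  have hlim : Tendsto (fun ρ : ℝ ↦ √(ρ / a)) (𝓝[>] 0) (𝓝[>] 0) := by
    refine tendsto_nhdsWithin_iff.2 ⟨?_, ?_⟩
    · have hcont : Continuous fun ρ : ℝ ↦ √(ρ / a) := by fun_prop
      simpa using (hcont.tendsto 0).mono_left nhdsWithin_le_nhds
    · filter_upwards [self_mem_nhdsWithin] with ρ hρ
      exact Real.sqrt_pos.2 (div_pos hρ ha)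
  filter_upwards [hlim.eventually hP, self_mem_nhdsWithin] with ρ hPρ hρ
  have hρa : 0 < ρ / a := div_pos hρ ha
  exact ⟨√(ρ / a), Real.sqrt_pos.2 hρa, by rw [Real.sq_sqrt hρa.le, div_mul_cancel₀ _ ha.ne'], hPρ⟩

end SmallParameters

section PowerIntegrals

variable {X : Type*} [MeasurableSpace X] {μ : Measure X} {u : X → ℝ} {s : Set X} {q M : ℝ}

theorem integral_rpow_pos_of_hasCompactSupport [TopologicalSpace X] [OpensMeasurableSpace X]
    [IsFiniteMeasureOnCompacts μ] [μ.IsOpenPosMeasure] (hq : 0 < q) (hu : Continuous u)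
    (hu_supp : HasCompactSupport u) (hu0 : 0 ≤ u) {x : X} (hx : u x ≠ 0) :
    0 < ∫ y, u y ^ q ∂μ :=
  (hu.rpow_const fun _ ↦ .inr hq.le).integral_pos_of_hasCompactSupport_nonneg_nonzero
    (hu_supp.comp_left (g := (· ^ q)) (Real.zero_rpow hq.ne'))
    (fun y ↦ Real.rpow_nonneg (hu0 y) q) ((Real.rpow_ne_zero (hu0 x) hq.ne').2 hx)

theorem setIntegral_rpow_eq_integral_of_support_subset (hq : q ≠ 0)
    (hus : Function.support u ⊆ s) : ∫ x in s, u x ^ q ∂μ = ∫ x, u x ^ q ∂μ :=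
  setIntegral_eq_integral_of_forall_compl_eq_zero fun x hx ↦ by
    rw [Function.notMem_support.1 fun hxu ↦ hx (hus hxu), Real.zero_rpow hq]

theorem integrableOn_add_const_rpow_of_bounded (hq : 0 ≤ q) (hs : μ s ≠ ⊤)
    (hu : AEMeasurable u (μ.restrict s)) (hM : ∀ x, |u x| ≤ M) (c : ℝ) :
    IntegrableOn (fun x ↦ (u x + c) ^ q) s μ := by
  refine .of_bound hs.lt_top ((hu.add_const c).pow_const q).aestronglyMeasurable ((M + |c|) ^ q)
    (.of_forall fun x ↦ ?_)
  have hbound : |u x + c| ≤ M + |c| := (abs_add_le _ _).trans (by gcongr; exact hM x)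
  exact (Real.abs_rpow_le_abs_rpow _ q).trans (by gcongr)

theorem rpow_mul_setIntegral_rpow_le_setIntegral_add_const_rpow (hq : 0 ≤ q) (hs : μ s ≠ ⊤)
    (hu : AEMeasurable u (μ.restrict s)) (hu0 : 0 ≤ u) (hM : ∀ x, u x ≤ M) {t c : ℝ}
    (ht : 0 ≤ t) (hc : 0 ≤ c) :
    t ^ q * ∫ x in s, u x ^ q ∂μ ≤ ∫ x in s, ((t • u) x + c) ^ q ∂μ := by
  have htu (x : X) : 0 ≤ (t • u) x := mul_nonneg ht (hu0 x)
  have hint (d : ℝ) : IntegrableOn (fun x ↦ ((t • u) x + d) ^ q) s μ :=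
    integrableOn_add_const_rpow_of_bounded (M := t * M) hq hs (hu.const_smul t)
      (fun x ↦ (abs_of_nonneg (htu x)).trans_le (mul_le_mul_of_nonneg_left (hM x) ht)) d
  calc t ^ q * ∫ x in s, u x ^ q ∂μ = ∫ x in s, ((t • u) x + 0) ^ q ∂μ := by
        rw [← integral_const_mul]
        simp only [Pi.smul_apply, smul_eq_mul, add_zero, Real.mul_rpow ht (hu0 _)]
    _ ≤ ∫ x in s, ((t • u) x + c) ^ q ∂μ := integral_mono (hint 0) (hint c) fun x ↦
        Real.rpow_le_rpow (by simpa using htu x) (by simpa using hc) hq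

end PowerIntegrals

section Energy

variable {E : Type*} [NormedAddCommGroup E] [NormedSpace ℝ E] [MeasurableSpace E]

/-- The Dirichlet integral `∫ |∇u|²`, with the operator norm of the derivative in place of the norm
of the gradient; the two agree on a Euclidean space. -/
noncomputable def dirichletIntegral (μ : Measure E) (u : E → ℝ) : ℝ :=
  ∫ x, ‖fderiv ℝ u x‖ ^ 2 ∂μ

/-- The regularized energy `J_ε(u)` of the singular problem on `Ω`, with respect to a reference
measure `μ`. -/
noncomputable def regularizedEnergy (μ : Measure E) (Ω : Set E) (r p ε : ℝ) (u : E → ℝ) : ℝ :=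
  (1 / 2) * dirichletIntegral μ u
    - (1 / (1 - r)) * (∫ x in Ω, (u x + ε) ^ (1 - r) ∂μ)
    - (1 / p) * (∫ x, u x ^ p ∂μ)

variable {μ : Measure E} {Ω : Set E} {r p M : ℝ} {φ : E → ℝ}

theorem dirichletIntegral_const_smul (t : ℝ) (u : E → ℝ) :
    dirichletIntegral μ (t • u) = t ^ 2 * dirichletIntegral μ u := by
  simp only [dirichletIntegral, fderiv_const_smul_field, Pi.smul_apply, norm_smul, mul_pow,
    Real.norm_eq_abs, sq_abs, integral_const_mul]

theorem eventually_dirichletIntegral_const_smul_lt (u : E → ℝ) {b : ℝ} (hb : 0 < b) :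
    ∀ᶠ t in 𝓝[>] (0 : ℝ), dirichletIntegral μ (t • u) < b := by
  filter_upwards [eventually_const_mul_rpow_lt_const_mul_rpow (a := dirichletIntegral μ u)
    two_pos hb] with t ht
  rw [dirichletIntegral_const_smul, mul_comm]
  simpa using ht

theorem regularizedEnergy_const_smul_le (hr : r ≤ 1) (hp : 0 ≤ p) (hΩ : μ Ω ≠ ⊤)
    (hφ : AEMeasurable φ (μ.restrict Ω)) (hφ0 : 0 ≤ φ) (hφM : ∀ x, φ x ≤ M) {t ε : ℝ}
    (ht : 0 ≤ t) (hε : 0 ≤ ε) :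
    regularizedEnergy μ Ω r p ε (t • φ) ≤
      (1 / 2) * (t ^ 2 * dirichletIntegral μ φ)
        - (1 / (1 - r)) * (t ^ (1 - r) * ∫ x in Ω, φ x ^ (1 - r) ∂μ) := by
  have hr' : 0 ≤ 1 - r := sub_nonneg.2 hr
  have hsingular := rpow_mul_setIntegral_rpow_le_setIntegral_add_const_rpow hr' hΩ hφ hφ0 hφM
    ht hε
  have hpower : 0 ≤ (1 / p) * ∫ x, (t • φ) x ^ p ∂μ :=
    mul_nonneg (by positivity)
      (integral_nonneg fun x ↦ Real.rpow_nonneg (mul_nonneg ht (hφ0 x)) p)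
  rw [regularizedEnergy, dirichletIntegral_const_smul]
  exact (sub_le_self _ hpower).trans (by gcongr)

theorem eventually_regularizedEnergy_const_smul_neg (hr0 : -1 < r) (hr1 : r < 1) (hp : 0 ≤ p)
    (hΩ : μ Ω ≠ ⊤) (hφ : AEMeasurable φ (μ.restrict Ω)) (hφ0 : 0 ≤ φ) (hφM : ∀ x, φ x ≤ M)
    (hφ_int : 0 < ∫ x in Ω, φ x ^ (1 - r) ∂μ) :
    ∀ᶠ t in 𝓝[>] (0 : ℝ), ∀ ε ≥ 0, regularizedEnergy μ Ω r p ε (t • φ) < 0 := by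
  have hr : 0 < 1 - r := sub_pos.2 hr1
  filter_upwards [eventually_const_mul_rpow_lt_const_mul_rpow (q := 1 - r) (s := 2)
    (a := (1 / 2) * dirichletIntegral μ φ) (by linarith) (mul_pos (one_div_pos.2 hr) hφ_int),
    self_mem_nhdsWithin] with t hdom ht ε hε
  rw [Real.rpow_two] at hdom
  have hle := regularizedEnergy_const_smul_le hr1.le hp hΩ hφ hφ0 hφM (mem_Ioi.1 ht).le hε
  linarith

end Energy

theorem stmt_4_general {E : Type*} [NormedAddCommGroup E] [NormedSpace ℝ E] [FiniteDimensional ℝ E]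
    [MeasurableSpace E] [OpensMeasurableSpace E] (μ : Measure E) [IsFiniteMeasureOnCompacts μ]
    [μ.IsOpenPosMeasure] {Ω : Set E} (hΩ : (interior Ω).Nonempty) (hμΩ : μ Ω ≠ ⊤) {r p : ℝ}
    (hr0 : -1 < r) (hr1 : r < 1) (hp : 0 < p) {τ : ℝ} (hτ : 0 < τ) :
    ∃ ρ₀ > (0 : ℝ), ∀ ρ ∈ Ioo 0 ρ₀, ∀ ε ≥ (0 : ℝ),
      ∃ u₀ : E → ℝ,
        ContDiff ℝ (⊤ : ℕ∞) u₀ ∧ HasCompactSupport u₀ ∧ tsupport u₀ ⊆ Ω ∧ (∀ x, 0 ≤ u₀ x) ∧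
        (∫ x, u₀ x ^ 2 ∂μ) = ρ ∧ dirichletIntegral μ u₀ < τ ^ 2 ∧
        regularizedEnergy μ Ω r p ε u₀ < 0 := by
  obtain ⟨x₀, hx₀⟩ := hΩ
  obtain ⟨φ, hφΩ, hφ_supp, hφ, hφ_range, hφx₀⟩ :=
    exists_contDiff_tsupport_subset (n := ⊤) (mem_interior_iff_mem_nhds.1 hx₀)
  have hφ0 : 0 ≤ φ := fun x ↦ (hφ_range (mem_range_self x)).1
  have hφ_int_pos {q : ℝ} (hq : 0 < q) : 0 < ∫ x, φ x ^ q ∂μ :=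
    integral_rpow_pos_of_hasCompactSupport hq hφ.continuous hφ_supp hφ0 (x := x₀) (by simp [hφx₀])
  have hr : 0 < 1 - r := sub_pos.2 hr1
  have hsq : 0 < ∫ x, φ x ^ 2 ∂μ := by simpa using hφ_int_pos two_pos
  have hsingular : 0 < ∫ x in Ω, φ x ^ (1 - r) ∂μ :=
    (hφ_int_pos hr).trans_eq (setIntegral_rpow_eq_integral_of_support_subset hr.ne'
      (subset_closure.trans hφΩ)).symm
  have hsmall := (eventually_dirichletIntegral_const_smul_lt (μ := μ) φ (pow_pos hτ 2)).and
    (eventually_regularizedEnergy_const_smul_neg hr0 hr1 hp.le hμΩ hφ.continuous.aemeasurable hφ0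
      (fun x ↦ (hφ_range (mem_range_self x)).2) hsingular)
  obtain ⟨ρ₀, hρ₀, hρ₀_sub⟩ :=
    mem_nhdsGT_iff_exists_Ioo_subset.1 (eventually_exists_sq_mul_eq hsq hsmall)
  refine ⟨ρ₀, hρ₀, fun ρ hρ ε hε ↦ ?_⟩
  obtain ⟨t, ht, htρ, hgrad, henergy⟩ := hρ₀_sub hρ
  refine ⟨t • φ, hφ.const_smul t, hφ_supp.smul_left (f := fun _ ↦ t),
    (tsupport_smul_subset_right (fun _ ↦ t) φ).trans hφΩ, fun x ↦ mul_nonneg ht.le (hφ0 x),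
    ?_, hgrad, henergy ε hε⟩
  simpa only [Pi.smul_apply, smul_eq_mul, mul_pow, integral_const_mul] using htρ

/-- For every τ > 0 there exists ρ₀ > 0 such that for every ρ ∈ (0, ρ₀) and
every ε ∈ (0, 1] there exists a smooth compactly supported nonnegative function u₀ supported
in Ω with ∫ u₀² = ρ, ∫ |∇u₀|² < τ², and J_ε(u₀) < 0. -/
theorem stmt_4 (N : ℕ) (hN : 3 ≤ N)
    (Ω : Set (EuclideanSpace ℝ (Fin N))) (hΩne : Ω.Nonempty) (hΩopen : IsOpen Ω)
    (hΩbdd : Bornology.IsBounded Ω)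
    (r : ℝ) (hr0 : 0 < r) (hr1 : r < 1)
    (p : ℝ) (hp1 : 2 + 4 / (N : ℝ) < p) (hp2 : p < 2 * N / ((N : ℝ) - 2)) :
    ∀ τ > (0 : ℝ), ∃ ρ₀ > (0 : ℝ),
      ∀ ρ ∈ Ioo (0 : ℝ) ρ₀, ∀ ε ∈ Ioc (0 : ℝ) 1,
        ∃ u₀ : EuclideanSpace ℝ (Fin N) → ℝ,
          ContDiff ℝ (⊤ : ℕ∞) u₀ ∧ HasCompactSupport u₀ ∧ tsupport u₀ ⊆ Ω ∧
          (∀ x, 0 ≤ u₀ x) ∧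
          (∫ x, (u₀ x) ^ 2) = ρ ∧
          (∫ x, ‖fderiv ℝ u₀ x‖ ^ 2) < τ ^ 2 ∧
          (1 / 2) * (∫ x, ‖fderiv ℝ u₀ x‖ ^ 2)
              - (1 / (1 - r)) * (∫ x in Ω, (u₀ x + ε) ^ (1 - r))
              - (1 / p) * (∫ x, (u₀ x) ^ p) < 0 := by
  intro τ hτ
  have hp : 0 < p := lt_trans (by positivity) hp1
  obtain ⟨ρ₀, hρ₀, h⟩ := stmt_4_general volume (hΩopen.interior_eq.symm ▸ hΩne)
    hΩbdd.measure_lt_top.ne (by linarith) hr1 hp hτ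
  exact ⟨ρ₀, hρ₀, fun ρ hρ ε hε ↦ h ρ hρ ε hε.1.le⟩
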